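/- arXiv:1512.03732 — 2 statements merged into one kernel-verified Lean document; each statement's English description precedes it below -/
import Mathlib

section
/- There exist a function ψ : ℕ → ℝ, monotonically nondecreasing with ψ(k) → ∞ and ψ(k) > 0 for all k, and a constant C > 0, such that for every k ∈ ℕ and every n ∈ ℕ with n·ψ(k) > k² one has (1/4)·binom(n + k/4, k) ≤ Q_k(n) ≤ C·binom(n + k/4, k). -/
open Finset

noncomputable section

/-- The generating set `S = {(1,0),(-1,0),(0,1),(0,-1)}` of ℤ². -/
def Sfin : Finset (ℤ × ℤ) := {(1,0), (-1,0), (0,1), (0,-1)}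

/-- `Q u n = E |u(S_n)|²` for the simple random walk on ℤ² started at 0. -/
noncomputable def Q (u : ℤ × ℤ → ℂ) (n : ℕ) : ℝ :=
  (4 : ℝ)⁻¹ ^ n * ∑ s ∈ Fintype.piFinset (fun _ : Fin n => Sfin), ‖u (∑ i, s i)‖ ^ 2

/-- Generalized binomial coefficient `binom(x,k) = (1/k!)·∏_{j<k}(x-j)`. -/
noncomputable def gbinom (x : ℝ) (k : ℕ) : ℝ :=
  (∏ j ∈ Finset.range k, (x - j)) / (Nat.factorial k)

/-- `F_k(x) = binom(x + (k-1)/2, k)`, a discretization of `x^k/k!`. -/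
noncomputable def F (k : ℕ) (x : ℝ) : ℝ := gbinom (x + ((k : ℝ) - 1) / 2) k

/-- `Z_k(x,y) = Σ_{l=0}^k i^l F_{k-l}(x) F_l(y)`, a harmonic discretization of `z^k/k!`. -/
noncomputable def Z (k : ℕ) (x y : ℝ) : ℂ :=
  ∑ l ∈ Finset.range (k + 1), Complex.I ^ l * (F (k - l) x : ℂ) * (F l y : ℂ)

/-- `Q_k := Q_{Z_k}` (with `Z_k` restricted to ℤ²). -/
noncomputable def Qk (k : ℕ) (n : ℕ) : ℝ := Q (fun p => Z k p.1 p.2) n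

lemma gbinom_pascal (x : ℝ) (k : ℕ) : gbinom (x + 1) (k + 1) = gbinom x (k + 1) + gbinom x k := by
  unfold gbinom
  rw [Finset.prod_range_succ', Finset.prod_range_succ (fun j : ℕ => x - (j : ℝ)), Nat.factorial_succ]
  have h : ∏ j ∈ range k, (x + 1 - ((j + 1 : ℕ) : ℝ)) = ∏ j ∈ range k, (x - (j : ℝ)) :=
    Finset.prod_congr rfl fun j _ => by push_cast; ring
  rw [h]
  have h1 : (k.factorial : ℝ) ≠ 0 := by positivity
  have h2 : ((k : ℝ) + 1) ≠ 0 := by positivity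
  push_cast
  field_simp
  ring

lemma F_zero (x : ℝ) : F 0 x = 1 := by simp [F, gbinom]

lemma F_one (x : ℝ) : F 1 x = x := by simp [F, gbinom]

lemma F_rec (k : ℕ) (x : ℝ) : F (k + 2) (x + 1) + F (k + 2) (x - 1) = 2 * F (k + 2) x + F k x := by
  have e1 : F (k + 2) (x + 1) = gbinom (x + ((k : ℝ) - 1) / 2 + 1 + 1) (k + 2) := by
    unfold F; congr 1; push_cast; ring
  have e2 : F (k + 2) x = gbinom (x + ((k : ℝ) - 1) / 2 + 1) (k + 2) := by
    unfold F; congr 1; push_cast; ring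
  have e3 : F (k + 2) (x - 1) = gbinom (x + ((k : ℝ) - 1) / 2) (k + 2) := by
    unfold F; congr 1; push_cast; ring
  have e4 : F k x = gbinom (x + ((k : ℝ) - 1) / 2) k := rfl
  rw [e1, e2, e3, e4, gbinom_pascal _ (k + 1), gbinom_pascal _ (k + 1), gbinom_pascal _ k]
  ring

lemma F_neg (k : ℕ) (x : ℝ) : F k (-x) = (-1) ^ k * F k x := by
  unfold F gbinom
  rw [← Finset.prod_range_reflect, ← mul_div_assoc]
  congr 1
  have : ((-1 : ℝ)) ^ k = ∏ j ∈ range k, (-1 : ℝ) := by simp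
  rw [this, ← Finset.prod_mul_distrib]
  refine Finset.prod_congr rfl fun j hj => ?_
  have hj' : j + 1 ≤ k := Finset.mem_range.1 hj
  have : ((k - 1 - j : ℕ) : ℝ) = k - 1 - j := by
    rw [Nat.sub_sub, Nat.cast_sub (by omega)]; push_cast; ring
  rw [this]; ring

lemma F_shift (k : ℕ) : (∏ j ∈ range (k + 1), (((k : ℝ) + 1) / 2 - j)) =
    (k + 1) / 2 * ∏ j ∈ range k, (((k : ℝ) - 1) / 2 - j) := by
  rw [Finset.prod_range_succ', mul_comm]
  congr 1
  · push_cast; ring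
  · exact Finset.prod_congr rfl fun j _ => by push_cast; ring

lemma F_at_zero (k : ℕ) : F (k + 2) 0 = -((k + 1) / (4 * (k + 2))) * F k 0 := by
  unfold F gbinom
  have e : (0 : ℝ) + (((k + 2 : ℕ) : ℝ) - 1) / 2 = ((k : ℝ) + 1) / 2 := by push_cast; ring
  rw [e, zero_add, Finset.prod_range_succ, F_shift, Nat.factorial_succ, Nat.factorial_succ]
  have h1 : (k.factorial : ℝ) ≠ 0 := by positivity
  have h2 : ((k : ℝ) + 1) ≠ 0 := by positivity
  have h3 : ((k : ℝ) + 2) ≠ 0 := by positivity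
  push_cast
  have h4 : ((k : ℝ) + 1 + 1) ≠ 0 := by positivity
  field_simp
  ring

lemma F_at_one (k : ℕ) : F (k + 2) 1 = F (k + 2) 0 + F k 0 / 2 := by
  have h := F_rec k 0
  have h2 := F_neg (k + 2) 1
  rw [F_at_zero]
  unfold F gbinom
  have e : (1 : ℝ) + (((k + 2 : ℕ) : ℝ) - 1) / 2 = ((k : ℝ) + 3) / 2 := by push_cast; ring
  rw [e, zero_add, Finset.prod_range_succ']
  have h : ∏ j ∈ range (k + 1), (((k : ℝ) + 3) / 2 - ((j + 1 : ℕ) : ℝ)) =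
      ∏ j ∈ range (k + 1), (((k : ℝ) + 1) / 2 - (j : ℝ)) :=
    Finset.prod_congr rfl fun j _ => by push_cast; ring
  rw [h, F_shift, Nat.factorial_succ, Nat.factorial_succ]
  have h1 : (k.factorial : ℝ) ≠ 0 := by positivity
  have h2 : ((k : ℝ) + 1) ≠ 0 := by positivity
  have h3 : ((k : ℝ) + 2) ≠ 0 := by positivity
  push_cast
  have h4 : ((k : ℝ) + 1 + 1) ≠ 0 := by positivity
  field_simp
  ring

lemma abs_F_zero_le (k : ℕ) : |F k 0| ≤ 1 := by
  induction k using Nat.twoStepInduction with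
  | zero => simp [F_zero]
  | one => simp [F_one]
  | more k ih _ =>
    rw [F_at_zero, abs_mul]
    have : |(-(((k : ℝ) + 1) / (4 * (k + 2))))| ≤ 1 := by
      rw [abs_neg, abs_of_nonneg (by positivity), div_le_one (by positivity)]
      linarith [(Nat.cast_nonneg k : (0 : ℝ) ≤ k)]
    calc _ ≤ 1 * 1 := mul_le_mul this ih (abs_nonneg _) zero_le_one
      _ = 1 := one_mul 1

open PowerSeries in
/-- generating series of `F_k(x)` -/
def FS (x : ℝ) : PowerSeries ℂ := PowerSeries.mk fun k => (F k x : ℂ)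

/-- the series `c` -/
abbrev cS : PowerSeries ℂ := FS 0

/-- the quarter -/
abbrev q4 : PowerSeries ℂ := PowerSeries.C (1 / 4 : ℂ)

lemma q4_four : (4 : PowerSeries ℂ) * q4 = 1 := by
  have : (4 : PowerSeries ℂ) = PowerSeries.C (4 : ℂ) := (map_ofNat PowerSeries.C 4).symm
  rw [this, ← map_mul]; norm_num

open PowerSeries in
lemma FS_rec (x : ℝ) : FS (x + 1) + FS (x - 1) = (2 + X ^ 2) * FS x := by
  ext k
  rw [add_mul, map_add, map_add, mul_comm (X ^ 2)]
  have h2 : (2 : PowerSeries ℂ) = C (2 : ℂ) := (map_ofNat C 2).symm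
  rw [h2, coeff_C_mul]
  match k with
  | 0 => simp [FS, F_zero, coeff_mul_X_pow']; norm_num
  | 1 => simp [FS, F_one, coeff_mul_X_pow']; ring
  | k + 2 =>
    rw [coeff_mul_X_pow]
    simp only [FS, coeff_mk]
    exact_mod_cast F_rec k x

open PowerSeries in
lemma FS_one : FS 1 = cS * (1 + 2 * q4 * X ^ 2) + X := by
  ext k
  have : cS * (1 + 2 * q4 * X ^ 2) = cS + C (1 / 2 : ℂ) * (cS * X ^ 2) := by
    have h2 : C (1 / 2 : ℂ) = 2 * q4 := by
      have h2 : (2 : PowerSeries ℂ) = C (2 : ℂ) := (map_ofNat C 2).symm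
      rw [h2, ← map_mul]; norm_num
    rw [h2]; ring
  rw [this, map_add, map_add, coeff_C_mul]
  match k with
  | 0 => simp [FS, F_zero, coeff_mul_X_pow']
  | 1 => simp [FS, F_one, coeff_mul_X_pow']
  | k + 2 =>
    rw [coeff_mul_X_pow]
    simp only [FS, coeff_mk, coeff_X, F_at_one]
    push_cast
    simp; ring

open PowerSeries in
lemma FS_neg (x : ℝ) : FS (-x) = rescale (-1 : ℂ) (FS x) := by
  ext k
  rw [coeff_rescale]
  simp only [FS, coeff_mk, F_neg]
  push_cast; ring

open PowerSeries in
lemma cS_sq : cS ^ 2 * (1 + q4 * X ^ 2) = 1 := by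
  have hd : d⁄dX ℂ cS * (1 + q4 * X ^ 2) = - (q4 * X * cS) := by
    have : d⁄dX ℂ cS * (1 + q4 * X ^ 2) = d⁄dX ℂ cS + q4 * (d⁄dX ℂ cS * X ^ 2) := by ring
    rw [this, mul_assoc, mul_comm X]
    ext k
    rw [map_add, map_neg, coeff_C_mul, coeff_C_mul]
    match k with
    | 0 => simp [FS, F_one, coeff_mul_X_pow', coeff_derivative]
    | 1 =>
      have := F_at_zero 0
      simp [FS, coeff_mul_X_pow', coeff_derivative, coeff_succ_mul_X, F_zero] at this ⊢
      rw [this]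
      push_cast; ring
    | k + 2 =>
      rw [coeff_mul_X_pow, coeff_succ_mul_X]
      simp only [FS, coeff_mk, coeff_derivative]
      rw [show k + 2 + 1 = (k + 1) + 2 by ring, F_at_zero]
      have h3 : ((k : ℂ) + 3) ≠ 0 := by exact_mod_cast (by omega : k + 3 ≠ 0)
      have h4 : ((k : ℂ) + 1 + 2) ≠ 0 := by exact_mod_cast (by omega : k + 1 + 2 ≠ 0)
      push_cast
      field_simp
      ring
  apply derivative.ext
  · rw [derivative_one]
    have hq : d⁄dX ℂ q4 = 0 := derivative_C
    simp only [Derivation.leibniz, Derivation.leibniz_pow, map_add, hq, derivative_X, derivative_one, smul_eq_mul]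
    simp
    linear_combination 2 * cS * hd
  · simp [FS, F_zero]

/-- translation multiplier -/
def AS : PowerSeries ℂ :=
  1 + 2 * q4 * PowerSeries.X ^ 2 + PowerSeries.X * ((1 + q4 * PowerSeries.X ^ 2) * cS)

open PowerSeries in
lemma AS_mul_zero : AS * FS 0 = FS 1 := by
  rw [FS_one, AS]
  linear_combination X * cS_sq

open PowerSeries in
lemma FS_neg_one : FS (-1) = cS * (1 + 2 * q4 * X ^ 2) - X := by
  have h := FS_rec 0
  simp only [zero_add, zero_sub] at h
  have h1 := FS_one
  linear_combination h - h1 - X ^ 2 * FS 0 * q4_four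

open PowerSeries in
lemma AS_mul_neg_one : AS * FS (-1) = FS 0 := by
  rw [FS_neg_one, AS]
  linear_combination X * (1 + 2 * q4 * X ^ 2) * cS_sq + (q4 * X ^ 4 * FS 0 + X ^ 2 * FS 0) * q4_four

lemma AS_mul_nat (n : ℕ) : AS * FS ((n : ℝ) - 1) = FS n ∧ AS * FS n = FS ((n : ℝ) + 1) := by
  induction n with
  | zero => simp [AS_mul_zero, AS_mul_neg_one]
  | succ n ih =>
    push_cast
    rw [add_sub_cancel_right]
    refine ⟨ih.2, ?_⟩
    have h1 := FS_rec (n + 1)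
    have h2 := FS_rec n
    rw [add_sub_cancel_right] at h1
    linear_combination AS * h2 - h1 - ih.1 + (2 + PowerSeries.X ^ 2) * ih.2

lemma AS_mul_negnat (n : ℕ) : AS * FS (-(n : ℝ) - 1) = FS (-n) ∧ AS * FS (-n) = FS (-(n : ℝ) + 1) := by
  induction n with
  | zero => simp [AS_mul_zero, AS_mul_neg_one]
  | succ n ih =>
    push_cast
    have e1 : (-((n : ℝ) + 1)) = - n - 1 := by ring
    have e2 : (-((n : ℝ) + 1) + 1) = - n := by ring
    rw [e2, e1]
    refine ⟨?_, ih.1⟩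
    have h1 := FS_rec (- n - 1)
    have h2 := FS_rec (- n)
    rw [sub_add_cancel] at h1
    linear_combination AS * h1 - h2 - ih.2 + (2 + PowerSeries.X ^ 2) * ih.1

lemma AS_mul (x : ℤ) : AS * FS x = FS (x + 1) := by
  obtain ⟨n, rfl | rfl⟩ := Int.eq_nat_or_neg x
  · exact_mod_cast (AS_mul_nat n).2
  · push_cast; exact (AS_mul_negnat n).2

open PowerSeries in
lemma AS_mul' (x : ℤ) : rescale (-1 : ℂ) AS * FS x = FS (x - 1) := by
  have h := AS_mul (-x)
  have h1 : FS (x : ℝ) = rescale (-1 : ℂ) (FS ((-x : ℤ) : ℝ)) := by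
    rw [← FS_neg]; push_cast; rw [neg_neg]
  rw [h1, ← map_mul, h, ← FS_neg]
  push_cast
  congr 1; ring

/-- bivariate power series -/
abbrev PP := PowerSeries (PowerSeries ℂ)

/-- bivariate coefficient -/
def cf (j k : ℕ) (f : PP) : ℂ := PowerSeries.coeff k (PowerSeries.coeff j f)

lemma cf_add (j k : ℕ) (f g : PP) : cf j k (f + g) = cf j k f + cf j k g := by simp [cf]

lemma cf_sub (j k : ℕ) (f g : PP) : cf j k (f - g) = cf j k f - cf j k g := by simp [cf]

lemma cf_sum {ι : Type*} (t : Finset ι) (j k : ℕ) (f : ι → PP) :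
    cf j k (∑ i ∈ t, f i) = ∑ i ∈ t, cf j k (f i) := by simp [cf]

lemma cf_CC (j k : ℕ) (a : ℂ) (f : PP) :
    cf j k (PowerSeries.C (PowerSeries.C a) * f) = a * cf j k f := by
  simp [cf, PowerSeries.coeff_C_mul]

lemma cf_mul (j k : ℕ) (f g : PP) : cf j k (f * g) =
    ∑ p ∈ antidiagonal j, ∑ q ∈ antidiagonal k, cf p.1 q.1 f * cf p.2 q.2 g := by
  simp [cf, PowerSeries.coeff_mul]

/-- `f(t) * conj f (u)` -/
def tens (f : PowerSeries ℂ) : PP :=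
  PowerSeries.map (PowerSeries.C) f * PowerSeries.C (PowerSeries.map (starRingEnd ℂ) f)

lemma tens_mul (f g : PowerSeries ℂ) : tens (f * g) = tens f * tens g := by
  simp only [tens, map_mul]; ring

lemma cf_tens (j k : ℕ) (f : PowerSeries ℂ) : cf j k (tens f) =
    PowerSeries.coeff j f * (starRingEnd ℂ) (PowerSeries.coeff k f) := by
  simp [cf, tens, PowerSeries.coeff_mul_C, PowerSeries.coeff_C_mul]

/-- generating series of `Z_k` -/
def ZS (p : ℤ × ℤ) : PowerSeries ℂ := FS p.1 * PowerSeries.rescale Complex.I (FS p.2)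

lemma coeff_ZS (k : ℕ) (p : ℤ × ℤ) : PowerSeries.coeff k (ZS p) = Z k p.1 p.2 := by
  rw [ZS, mul_comm, PowerSeries.coeff_mul, Z,
    Finset.Nat.sum_antidiagonal_eq_sum_range_succ_mk]
  refine Finset.sum_congr rfl fun l _ => ?_
  simp only [PowerSeries.coeff_rescale, FS, PowerSeries.coeff_mk]
  ring

/-- step multipliers -/
def mlt (s : ℤ × ℤ) : PowerSeries ℂ :=
  if s = (1, 0) then AS else if s = (-1, 0) then PowerSeries.rescale (-1 : ℂ) AS
  else if s = (0, 1) then PowerSeries.rescale Complex.I AS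
  else PowerSeries.rescale Complex.I (PowerSeries.rescale (-1 : ℂ) AS)

lemma ZS_step (s p : ℤ × ℤ) (hs : s ∈ Sfin) : ZS (s + p) = mlt s * ZS p := by
  simp only [Sfin, Finset.mem_insert, Finset.mem_singleton] at hs
  rcases hs with rfl | rfl | rfl | rfl
  · simp only [mlt, ZS, Prod.fst_add, Prod.snd_add, zero_add, if_true]
    rw [← mul_assoc, AS_mul]; push_cast; rw [add_comm]
  · simp only [mlt, ZS, Prod.fst_add, Prod.snd_add, zero_add]
    rw [if_neg (by decide), if_pos trivial, ← mul_assoc, AS_mul']; push_cast; rw [neg_add_eq_sub]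
  · simp only [mlt, ZS, Prod.fst_add, Prod.snd_add, zero_add]
    rw [if_neg (by decide), if_neg (by decide), if_pos trivial, mul_left_comm, ← map_mul, AS_mul]
    push_cast; rw [add_comm]
  · simp only [mlt, ZS, Prod.fst_add, Prod.snd_add, zero_add]
    rw [if_neg (by decide), if_neg (by decide), if_neg (by decide), mul_left_comm, ← map_mul, AS_mul']
    push_cast; rw [neg_add_eq_sub]

lemma tens_walk {n : ℕ} (s : Fin n → ℤ × ℤ) (hs : ∀ i, s i ∈ Sfin) (t : Finset (Fin n)) :
    tens (ZS (∑ i ∈ t, s i)) = (∏ i ∈ t, tens (mlt (s i))) * tens (ZS 0) := by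
  induction t using Finset.induction_on with
  | empty => simp
  | insert a t ha ih =>
    rw [Finset.sum_insert ha, Finset.prod_insert ha, ZS_step _ _ (hs a), tens_mul, ih, mul_assoc]

/-- transfer series -/
def TT : PP := PowerSeries.C (PowerSeries.C (1 / 4 : ℂ)) * ∑ s ∈ Sfin, tens (mlt s)

lemma walk_sum (n : ℕ) : ∑ s ∈ Fintype.piFinset (fun _ : Fin n => Sfin), tens (ZS (∑ i, s i)) =
    (∑ s ∈ Sfin, tens (mlt s)) ^ n * tens (ZS 0) := by
  have h : (∑ s ∈ Sfin, tens (mlt s)) ^ n = ∏ _i : Fin n, ∑ s ∈ Sfin, tens (mlt s) := by simp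
  rw [h, Finset.prod_univ_sum, Finset.sum_mul]
  exact Finset.sum_congr rfl fun s hs => tens_walk s (fun i => Fintype.mem_piFinset.1 hs i) _

lemma Qk_eq (k n : ℕ) : (Qk k n : ℂ) = cf k k (TT ^ n * tens (ZS 0)) := by
  rw [TT, mul_pow, mul_assoc, ← walk_sum, ← map_pow, ← map_pow, cf_CC, cf_sum]
  unfold Qk Q
  push_cast
  congr 1
  · norm_num
  · refine Finset.sum_congr rfl fun s _ => ?_
    rw [cf_tens, coeff_ZS, Complex.mul_conj, Complex.normSq_eq_norm_sq]
    push_cast; rfl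

/-- coefficients of `AS` -/
def al (j : ℕ) : ℂ := PowerSeries.coeff j AS

lemma AS_eq : AS = 1 + PowerSeries.C (1 / 2 : ℂ) * PowerSeries.X ^ 2 + cS * PowerSeries.X ^ 1 +
    q4 * (cS * PowerSeries.X ^ 3) := by
  have h2 : PowerSeries.C (1 / 2 : ℂ) = 2 * q4 := by
    have h2 : (2 : PowerSeries ℂ) = PowerSeries.C (2 : ℂ) := (map_ofNat PowerSeries.C 2).symm
    rw [h2, ← map_mul]; norm_num
  rw [AS, h2]; ring

lemma coeff_cS (j : ℕ) : PowerSeries.coeff j cS = (F j 0 : ℂ) := by simp [FS]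

lemma al_eq (j : ℕ) : al j = (if j = 0 then 1 else 0) + 1 / 2 * (if j = 2 then 1 else 0) +
    (if 1 ≤ j then (F (j - 1) 0 : ℂ) else 0) + 1 / 4 * (if 3 ≤ j then (F (j - 3) 0 : ℂ) else 0) := by
  rw [al, AS_eq, map_add, map_add, map_add, PowerSeries.coeff_C_mul, PowerSeries.coeff_C_mul,
    PowerSeries.coeff_mul_X_pow', PowerSeries.coeff_mul_X_pow', PowerSeries.coeff_X_pow,
    PowerSeries.coeff_one, coeff_cS, coeff_cS]

lemma al_zero : al 0 = 1 := by simp [al_eq]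
lemma al_one : al 1 = 1 := by simp [al_eq, F_zero]
lemma al_two : al 2 = 1 / 2 := by simp [al_eq, F_one]
lemma al_four : al 4 = 0 := by
  have : F 3 0 = 0 := by rw [F_at_zero 1, F_one]; simp
  simp [al_eq, F_one, this]

lemma norm_al (j : ℕ) : ‖al j‖ ≤ 2 := by
  have hF : ∀ i, ‖(F i 0 : ℂ)‖ ≤ 1 := fun i => by
    rw [Complex.norm_real]; exact abs_F_zero_le i
  match j with
  | 0 => simp [al_zero]
  | 1 => simp [al_one]
  | 2 => rw [al_two]; norm_num
  | j + 3 =>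
    rw [al_eq]
    simp only [Nat.add_eq_zero_iff, OfNat.ofNat_ne_zero, and_false, if_false]
    rw [if_neg (by omega), if_pos (by omega), if_pos (by omega)]
    have h1 := hF (j + 3 - 1)
    have h2 := hF (j + 3 - 3)
    calc _ = ‖(F (j + 3 - 1) 0 : ℂ) + 1 / 4 * (F (j + 3 - 3) 0 : ℂ)‖ := by congr 1; ring
      _ ≤ ‖(F (j + 3 - 1) 0 : ℂ)‖ + ‖1 / 4 * (F (j + 3 - 3) 0 : ℂ)‖ := norm_add_le _ _
      _ ≤ 2 := by rw [norm_mul]; norm_num at h1 h2 ⊢; linarith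

/-- phase of direction `s` -/
def ph (s : ℤ × ℤ) : ℂ := if s = (1, 0) then 1 else if s = (-1, 0) then -1
  else if s = (0, 1) then Complex.I else - Complex.I

lemma coeff_mlt (s : ℤ × ℤ) (j : ℕ) : PowerSeries.coeff j (mlt s) = ph s ^ j * al j := by
  unfold mlt ph al
  split_ifs
  · simp
  · simp [PowerSeries.coeff_rescale]
  · simp [PowerSeries.coeff_rescale]
  · rw [PowerSeries.coeff_rescale, PowerSeries.coeff_rescale, neg_pow Complex.I]; ring

lemma norm_ph (s : ℤ × ℤ) : ‖ph s‖ = 1 := by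
  unfold ph; split_ifs <;> simp

lemma sum_Sfin {M : Type*} [AddCommMonoid M] (f : ℤ × ℤ → M) :
    ∑ s ∈ Sfin, f s = f (1, 0) + (f (-1, 0) + (f (0, 1) + f (0, -1))) := by
  unfold Sfin
  rw [Finset.sum_insert (by decide), Finset.sum_insert (by decide), Finset.sum_insert (by decide),
    Finset.sum_singleton]

lemma cf_TT (j k : ℕ) : cf j k TT = 1 / 4 * ((1 + ((-1) ^ j * (-1) ^ k + (Complex.I ^ j * (-Complex.I) ^ k +
    (-Complex.I) ^ j * Complex.I ^ k))) * (al j * (starRingEnd ℂ) (al k))) := by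
  rw [TT, cf_CC, sum_Sfin]
  simp only [cf_add, cf_tens, coeff_mlt]
  have e1 : ph (1, 0) = 1 := rfl
  have e2 : ph (-1, 0) = -1 := by simp [ph]
  have e3 : ph (0, 1) = Complex.I := by simp [ph]
  have e4 : ph (0, -1) = -Complex.I := by simp [ph]
  rw [e1, e2, e3, e4]
  simp only [map_mul, map_pow, map_neg, map_one, Complex.conj_I, neg_neg]
  ring

/-- `1 + tu/2` -/
def dd : PP := 1 + PowerSeries.C (PowerSeries.C (1 / 2 : ℂ)) * (PowerSeries.X * PowerSeries.C PowerSeries.X)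

lemma cf_dd_pow (N j k : ℕ) : cf j k (dd ^ N) = if j = k then (N.choose j : ℂ) / 2 ^ j else 0 := by
  rw [dd, add_comm, add_pow, cf_sum]
  have h : ∀ m, cf j k ((PowerSeries.C (PowerSeries.C (1 / 2 : ℂ)) * (PowerSeries.X * PowerSeries.C PowerSeries.X)) ^ m
      * 1 ^ (N - m) * (N.choose m : PP)) = if j = m ∧ k = m then (N.choose m : ℂ) / 2 ^ m else 0 := by
    intro m
    have e : (PowerSeries.C (PowerSeries.C (1 / 2 : ℂ)) * (PowerSeries.X * PowerSeries.C PowerSeries.X)) ^ m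
      * 1 ^ (N - m) * (N.choose m : PP) = PowerSeries.C (PowerSeries.C ((N.choose m : ℂ) / 2 ^ m)) *
        (PowerSeries.C (PowerSeries.X ^ m) * PowerSeries.X ^ m) := by
      have : (N.choose m : ℂ) / 2 ^ m = (N.choose m : ℂ) * (1 / 2) ^ m := by
        rw [one_div, inv_pow, div_eq_mul_inv]
      rw [this]
      simp only [mul_pow, map_mul, map_pow, map_natCast, one_pow, mul_one]
      ring
    rw [e, cf_CC, cf, PowerSeries.coeff_C_mul, PowerSeries.coeff_X_pow]
    by_cases hj : j = m <;> by_cases hk : k = m <;> simp [hj, hk, PowerSeries.coeff_X_pow]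
  rw [Finset.sum_congr rfl fun m _ => h m]
  by_cases hjk : j = k
  · subst hjk
    simp only [and_self, if_true, Finset.sum_ite_eq, Finset.mem_range]
    split_ifs with hh
    · rfl
    · rw [Nat.choose_eq_zero_of_lt (by omega)]; simp
  · rw [if_neg hjk]
    exact Finset.sum_eq_zero fun m _ => if_neg fun hh => hjk (hh.1.trans hh.2.symm)

lemma cf_diff_low (j k : ℕ) (h : j + k < 6) : cf j k (TT - dd ^ 2) = 0 := by
  rw [cf_sub, cf_TT, cf_dd_pow]
  have hI3 : Complex.I ^ 3 = -Complex.I := by rw [pow_succ, Complex.I_sq]; ring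
  have hI4 : Complex.I ^ 4 = 1 := Complex.I_pow_four
  have hI5 : Complex.I ^ 5 = Complex.I := by rw [pow_succ, hI4]; ring
  have hj : j < 6 := by omega
  have hk : k < 6 := by omega
  interval_cases j <;> interval_cases k <;> first | omega | skip
  all_goals simp only [al_zero, al_one, al_two, al_four, neg_pow Complex.I, hI3, hI4, hI5, Complex.I_sq, pow_zero, pow_one, map_zero]
  all_goals norm_num [Nat.choose, Complex.conj_ofNat]

lemma norm_cf_diff (j k : ℕ) : ‖cf j k (TT - dd ^ 2)‖ ≤ 5 := by
  rw [cf_sub, cf_TT, cf_dd_pow]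
  have hj := norm_al j
  have hk := norm_al k
  have h1 : ‖(if j = k then (Nat.choose 2 j : ℂ) / 2 ^ j else 0)‖ ≤ 1 := by
    split_ifs
    · have h2 : ‖(2 : ℂ)‖ = 2 := by norm_num
      rw [norm_div, norm_pow, Complex.norm_natCast, h2]
      rw [div_le_one (by positivity)]
      match j with
      | 0 => simp
      | 1 => simp
      | 2 => norm_num
      | j + 3 => rw [Nat.choose_eq_zero_of_lt (by omega)]; simp
    · simp
  have h2 : ‖(1 + ((-1) ^ j * (-1) ^ k + (Complex.I ^ j * (-Complex.I) ^ k +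
    (-Complex.I) ^ j * Complex.I ^ k)) : ℂ)‖ ≤ 4 := by
    refine (norm_add_le _ _).trans ?_
    have a := norm_add_le ((-1) ^ j * (-1) ^ k : ℂ) (Complex.I ^ j * (-Complex.I) ^ k +
      (-Complex.I) ^ j * Complex.I ^ k)
    have b := norm_add_le (Complex.I ^ j * (-Complex.I) ^ k) ((-Complex.I) ^ j * Complex.I ^ k)
    simp only [norm_mul, norm_pow, norm_neg, Complex.norm_I, norm_one, one_pow, mul_one] at a b ⊢
    linarith
  refine (norm_sub_le _ _).trans ?_
  rw [norm_mul, norm_mul, norm_mul, RCLike.norm_conj]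
  have h3 : ‖al j‖ * ‖al k‖ ≤ 2 * 2 := mul_le_mul hj hk (norm_nonneg _) (by norm_num)
  have h4 := mul_le_mul h2 h3 (by positivity) (by norm_num)
  have h5 : ‖(1 / 4 : ℂ)‖ = 1 / 4 := by norm_num
  rw [h5]
  linarith

lemma norm_Z_zero (k : ℕ) : ‖PowerSeries.coeff k (ZS 0)‖ ≤ 2 ^ k := by
  rw [coeff_ZS, Z]
  have hF : ∀ i, ‖(F i 0 : ℂ)‖ ≤ 1 := fun i => by
    rw [Complex.norm_real]; exact abs_F_zero_le i
  refine (norm_sum_le _ _).trans ?_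
  have : ∀ l ∈ range (k + 1), ‖Complex.I ^ l * (F (k - l) ((0 : ℤ × ℤ).1 : ℝ) : ℂ) * (F l ((0 : ℤ × ℤ).2 : ℝ) : ℂ)‖ ≤ 1 := by
    intro l _
    simp only [norm_mul, norm_pow, Complex.norm_I, one_pow, one_mul, Prod.fst_zero, Prod.snd_zero, Int.cast_zero]
    exact mul_le_one₀ (hF _) (norm_nonneg _) (hF _)
  refine (Finset.sum_le_sum this).trans ?_
  simp only [Finset.sum_const, Finset.card_range, nsmul_eq_mul, mul_one]
  exact_mod_cast (Nat.lt_two_pow_self (n := k))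

lemma cf_one (j k : ℕ) : cf j k 1 = if j = 0 ∧ k = 0 then 1 else 0 := by
  simp only [cf, PowerSeries.coeff_one]
  by_cases hj : j = 0 <;> by_cases hk : k = 0 <;> simp [hj, hk, PowerSeries.coeff_one]

lemma cf_W_low : cf 0 0 (tens (ZS 0) - 1) = 0 := by
  rw [cf_sub, cf_one, cf_tens, coeff_ZS]
  simp [Z, F_zero]

lemma norm_cf_W (j k : ℕ) : ‖cf j k (tens (ZS 0) - 1)‖ ≤ 2 ^ (j + k) := by
  by_cases h : j = 0 ∧ k = 0
  · rw [h.1, h.2, cf_W_low]; simp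
  · rw [cf_sub, cf_one, if_neg h, sub_zero, cf_tens, norm_mul, RCLike.norm_conj, pow_add]
    exact mul_le_mul (norm_Z_zero j) (norm_Z_zero k) (norm_nonneg _) (by positivity)

/-- weighted sup bound -/
def SB (k : ℕ) (r : ℝ) (f : PP) (σ : ℝ) : Prop :=
  ∀ a ≤ k, ∀ b ≤ k, ‖cf a b f‖ * r ^ (a + b) ≤ σ

/-- weighted decay -/
def DB (r : ℝ) (f : PP) (q : ℝ) : Prop :=
  ∀ a b, ‖cf a b f‖ * r ^ (a + b) ≤ q / 4 * ((1 / 2) ^ a * (1 / 2) ^ b)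

lemma geo_anti (a : ℕ) : ∑ p ∈ antidiagonal a, (1 / 2 : ℝ) ^ p.1 ≤ 2 := by
  rw [Finset.Nat.sum_antidiagonal_eq_sum_range_succ_mk]
  have h : ∑ i ∈ range (a + 1), (1 / 2 : ℝ) ^ i = 2 - 2 * (1 / 2) ^ (a + 1) := by
    rw [geom_sum_eq (by norm_num)]; ring
  simp only
  rw [h]
  have : (0 : ℝ) ≤ (1 / 2) ^ (a + 1) := by positivity
  linarith

lemma SB_mul {k : ℕ} {r q σ : ℝ} {f g : PP} (hr : 0 ≤ r) (hq : 0 ≤ q) (hσ : 0 ≤ σ)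
    (hf : DB r f q) (hg : SB k r g σ) : SB k r (f * g) (q * σ) := by
  intro a ha b hb
  rw [cf_mul]
  calc _ ≤ (∑ p ∈ antidiagonal a, ∑ s ∈ antidiagonal b, ‖cf p.1 s.1 f * cf p.2 s.2 g‖) * r ^ (a + b) := by
        gcongr
        exact (norm_sum_le _ _).trans (Finset.sum_le_sum fun p _ => norm_sum_le _ _)
    _ ≤ ∑ p ∈ antidiagonal a, ∑ s ∈ antidiagonal b, (q / 4 * ((1 / 2) ^ p.1 * (1 / 2) ^ s.1)) * σ := by
        rw [Finset.sum_mul]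
        refine Finset.sum_le_sum fun p hp => ?_
        rw [Finset.sum_mul]
        refine Finset.sum_le_sum fun s hs => ?_
        have hp' := Finset.HasAntidiagonal.mem_antidiagonal.1 hp
        have hs' := Finset.HasAntidiagonal.mem_antidiagonal.1 hs
        have e : r ^ (a + b) = r ^ (p.1 + s.1) * r ^ (p.2 + s.2) := by
          rw [← pow_add]; congr 1; omega
        rw [e, norm_mul, mul_mul_mul_comm]
        exact mul_le_mul (hf _ _) (hg _ (by omega) _ (by omega)) (by positivity) (by positivity)
    _ = q / 4 * σ * ((∑ p ∈ antidiagonal a, (1 / 2 : ℝ) ^ p.1) * (∑ p ∈ antidiagonal b, (1 / 2 : ℝ) ^ p.1)) := by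
        rw [Finset.sum_mul_sum, Finset.mul_sum]
        refine Finset.sum_congr rfl fun p _ => ?_
        rw [Finset.mul_sum]
        exact Finset.sum_congr rfl fun s _ => by ring
    _ ≤ q / 4 * σ * (2 * 2) := by
        gcongr
        · exact geo_anti a
        · exact geo_anti b
    _ = q * σ := by ring

lemma SB_add {k : ℕ} {r σ τ : ℝ} {f g : PP} (hr : 0 ≤ r) (hf : SB k r f σ) (hg : SB k r g τ) :
    SB k r (f + g) (σ + τ) := by
  intro a ha b hb
  rw [cf_add]
  calc _ ≤ (‖cf a b f‖ + ‖cf a b g‖) * r ^ (a + b) := by gcongr; exact norm_add_le _ _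
    _ ≤ _ := by rw [add_mul]; exact add_le_add (hf a ha b hb) (hg a ha b hb)

lemma SB_sum {ι : Type*} {k : ℕ} {r : ℝ} (t : Finset ι) (f : ι → PP) (σ : ι → ℝ) (hr : 0 ≤ r)
    (hf : ∀ i ∈ t, SB k r (f i) (σ i)) : SB k r (∑ i ∈ t, f i) (∑ i ∈ t, σ i) := by
  intro a ha b hb
  rw [cf_sum]
  calc _ ≤ (∑ i ∈ t, ‖cf a b (f i)‖) * r ^ (a + b) := by gcongr; exact norm_sum_le _ _
    _ ≤ _ := by rw [Finset.sum_mul]; exact Finset.sum_le_sum fun i hi => hf i hi a ha b hb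

lemma SB_nat {k : ℕ} {r σ : ℝ} {f : PP} (c : ℕ) (hf : SB k r f σ) :
    SB k r (f * (c : PP)) (σ * c) := by
  intro a ha b hb
  have e : f * (c : PP) = PowerSeries.C (PowerSeries.C (c : ℂ)) * f := by
    rw [map_natCast, map_natCast, mul_comm]
  rw [e, cf_CC, norm_mul, Complex.norm_natCast, mul_assoc, mul_comm σ]
  exact mul_le_mul_of_nonneg_left (hf a ha b hb) (Nat.cast_nonneg c)

lemma DB_of {r K : ℝ} {f : PP} (d : ℕ) (hr : 0 ≤ r) (hr4 : 4 * r ≤ 1) (hK : 0 ≤ K)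
    (h1 : ∀ a b, ‖cf a b f‖ ≤ K * 2 ^ (a + b)) (h0 : ∀ a b, a + b < d → cf a b f = 0) :
    DB r f (4 * (K * (4 * r) ^ d)) := by
  intro a b
  by_cases h : a + b < d
  · rw [h0 a b h, norm_zero, zero_mul]; positivity
  · have h2 : (4 * r) ^ (a + b) ≤ (4 * r) ^ d := pow_le_pow_of_le_one (by positivity) hr4 (by omega)
    calc _ ≤ K * 2 ^ (a + b) * r ^ (a + b) := by gcongr; exact h1 a b
      _ = K * (4 * r) ^ (a + b) * (1 / 2) ^ (a + b) := by
        rw [mul_assoc, mul_assoc, ← mul_pow, ← mul_pow]; congr 2; ring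
      _ ≤ K * (4 * r) ^ d * (1 / 2) ^ (a + b) := by gcongr
      _ = _ := by rw [← pow_add]; ring

lemma SB_pow_mul {k : ℕ} {r q σ : ℝ} {f g : PP} (hr : 0 ≤ r) (hq : 0 ≤ q) (hσ : 0 ≤ σ)
    (hf : DB r f q) (hg : SB k r g σ) (j : ℕ) : SB k r (f ^ j * g) (q ^ j * σ) := by
  induction j with
  | zero => simpa using hg
  | succ j ih =>
    have := SB_mul hr hq (by positivity) hf ih
    rw [pow_succ', pow_succ', mul_assoc, mul_assoc]
    exact this

lemma SB_main {k n : ℕ} {r q ε σ : ℝ} {x d e : PP} (hr : 0 ≤ r) (hq : 0 ≤ q) (hε : 0 ≤ ε) (hσ : 0 ≤ σ)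
    (hx : DB r x q) (he : DB r e ε) (hd : ∀ i ≤ n, SB k r (d ^ i) σ) :
    SB k r ((x + d) ^ n * (e + 1) - d ^ n) (((1 + q) ^ n * (1 + ε) - 1) * σ) := by
  have e1 : (x + d) ^ n * (e + 1) - d ^ n =
      (∑ j ∈ range n, (x ^ (j + 1) * (e * d ^ (n - (j + 1)) + d ^ (n - (j + 1)))) * ((n.choose (j + 1) : ℕ) : PP)) + e * d ^ n := by
    rw [add_pow, Finset.sum_range_succ', add_mul, Finset.sum_mul]
    have : ∀ j ∈ range n, x ^ (j + 1) * d ^ (n - (j + 1)) * ((n.choose (j + 1) : ℕ) : PP) * (e + 1) =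
      (x ^ (j + 1) * (e * d ^ (n - (j + 1)) + d ^ (n - (j + 1)))) * ((n.choose (j + 1) : ℕ) : PP) :=
      fun j _ => by ring
    rw [Finset.sum_congr rfl this]
    simp only [pow_zero, Nat.choose_zero_right, Nat.cast_one, Nat.sub_zero]
    ring
  have e2 : ((1 + q) ^ n * (1 + ε) - 1) * σ =
      (∑ j ∈ range n, (q ^ (j + 1) * (ε * σ + σ)) * ((n.choose (j + 1) : ℕ) : ℝ)) + ε * σ := by
    rw [add_comm 1 q, add_pow, Finset.sum_range_succ']
    have : ∀ j ∈ range n, (q ^ (j + 1) * (ε * σ + σ)) * ((n.choose (j + 1) : ℕ) : ℝ) =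
      q ^ (j + 1) * 1 ^ (n - (j + 1)) * ((n.choose (j + 1) : ℕ) : ℝ) * ((1 + ε) * σ) :=
      fun j _ => by rw [one_pow]; ring
    rw [Finset.sum_congr rfl this, ← Finset.sum_mul]
    simp only [pow_zero, Nat.choose_zero_right, Nat.cast_one, one_pow]
    ring
  rw [e1, e2]
  refine SB_add hr (SB_sum _ _ _ hr fun j hj => ?_) (SB_mul hr hε hσ he (hd n le_rfl))
  refine SB_nat _ (SB_pow_mul hr hq (by positivity) hx ?_ _)
  exact SB_add hr (SB_mul hr hε hσ he (hd _ (by omega))) (hd _ (by omega))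

lemma pow_bound {q : ℝ} (n : ℕ) (hq : 0 ≤ q) (h : n * q ≤ 1 / 16) : (1 + q) ^ n ≤ 16 / 15 := by
  have h1 : (1 + q) ^ n ≤ Real.exp (n * q) := by
    rw [Real.exp_nat_mul]
    exact pow_le_pow_left₀ (by positivity) (by rw [add_comm]; exact Real.add_one_le_exp q) n
  have h2 : Real.exp (n * q) ≤ Real.exp (1 / 16) := Real.exp_le_exp.2 h
  have h3 : 1 - 1 / 16 ≤ Real.exp (-(1 / 16)) := Real.one_sub_le_exp_neg _
  have h4 : Real.exp (1 / 16) * Real.exp (-(1 / 16)) = 1 := by rw [← Real.exp_add]; simp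
  have h5 := Real.exp_pos (1 / 16)
  nlinarith

/-- main term -/
def MM (n m : ℕ) : ℝ := ((2 * n).choose m : ℝ) / 2 ^ m

lemma MM_mono {k n : ℕ} (hk : 1 ≤ k) (hkn : k ≤ n) (m : ℕ) (hm : m ≤ k) :
    MM n m * (2 * k / n) ^ m ≤ MM n k * (2 * k / n) ^ k := by
  have hn : (0 : ℝ) < n := by exact_mod_cast (by omega : 0 < n)
  induction hm using Nat.decreasingInduction with
  | self => rfl
  | of_succ m hm ih =>
    refine le_trans ?_ ih
    have h1 : (((2 * n).choose (m + 1) : ℕ) : ℝ) * (m + 1) = ((2 * n).choose m : ℕ) * (2 * n - m) := by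
      have := Nat.choose_succ_right_eq (2 * n) m
      have h2 : ((2 * n - m : ℕ) : ℝ) = 2 * n - m := by rw [Nat.cast_sub (by omega)]; push_cast; ring
      rw [← h2]; exact_mod_cast this
    have h2 : (((2 * n).choose m : ℕ) : ℝ) ≤ ((2 * n).choose (m + 1) : ℕ) * (k / n) := by
      rw [← mul_div_assoc, le_div_iff₀ hn]
      have a1 : ((m : ℝ) + 1) ≤ k := by exact_mod_cast hm
      have a2 : (k : ℝ) ≤ n := by exact_mod_cast hkn
      have a3 : (0 : ℝ) < m + 1 := by positivity
      have a4 : (0 : ℝ) ≤ ((2 * n).choose m : ℕ) := by positivity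
      refine le_of_mul_le_mul_right ?_ a3
      calc (((2 * n).choose m : ℕ) : ℝ) * n * (m + 1) = ((2 * n).choose m : ℕ) * (n * (m + 1)) := by ring
        _ ≤ ((2 * n).choose m : ℕ) * ((2 * n - m) * k) := by
          apply mul_le_mul_of_nonneg_left _ a4
          apply mul_le_mul <;> linarith
        _ = _ := by rw [← mul_assoc, ← h1]; ring
    unfold MM
    calc _ ≤ (((2 * n).choose (m + 1) : ℕ) * (k / n : ℝ)) / 2 ^ m * (2 * k / n) ^ m := by gcongr
      _ = _ := by rw [pow_succ, pow_succ]; field_simp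

lemma Q_main {k n : ℕ} (hk : 1 ≤ k) (h1 : (131072 : ℝ) * k ≤ n) (h2 : 10485760 * (k : ℝ) ^ 3 ≤ (n : ℝ) ^ 2) :
    |Qk k n - MM n k| ≤ MM n k / 4 := by
  have hk0 : (1 : ℝ) ≤ k := by exact_mod_cast hk
  have hn : (0 : ℝ) < n := by linarith
  have hkn : k ≤ n := by
    have : (k : ℝ) ≤ n := by linarith
    exact_mod_cast this
  set r : ℝ := Real.sqrt (2 * k / n) with hrdef
  have hr2 : r ^ 2 = 2 * k / n := Real.sq_sqrt (by positivity)
  have hr : 0 < r := Real.sqrt_pos.2 (by positivity)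
  have hr256 : r ≤ 1 / 256 := by
    rw [hrdef, Real.sqrt_le_left (by norm_num), div_le_iff₀ hn]; linarith
  have hrp : ∀ a, r ^ (a + a) = (2 * k / n) ^ a := fun a => by rw [← hr2, ← pow_mul]; congr 1; ring
  set σ := MM n k * (2 * k / n) ^ k with hσdef
  have hM : 0 ≤ MM n k := by unfold MM; positivity
  have hσ : 0 ≤ σ := by positivity
  have hd : ∀ i ≤ n, SB k r ((dd ^ 2) ^ i) σ := by
    intro i hi a ha b hb
    rw [← pow_mul, cf_dd_pow]
    split_ifs with hab
    · subst hab
      rw [hrp]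
      refine le_trans ?_ (MM_mono hk hkn a ha)
      gcongr
      rw [norm_div, norm_pow, Complex.norm_natCast, MM]
      have h2 : ‖(2 : ℂ)‖ = 2 := by norm_num
      rw [h2]
      gcongr
    · simpa using hσ
  have hx : DB r (TT - dd ^ 2) (4 * (5 * (4 * r) ^ 6)) := by
    refine DB_of 6 hr.le (by linarith) (by norm_num) (fun a b => ?_) cf_diff_low
    have : (1 : ℝ) ≤ 2 ^ (a + b) := one_le_pow₀ (by norm_num)
    linarith [norm_cf_diff a b]
  have he : DB r (tens (ZS 0) - 1) (4 * (1 * (4 * r) ^ 1)) := by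
    refine DB_of 1 hr.le (by linarith) (by norm_num) (fun a b => ?_) (fun a b hab => ?_)
    · rw [one_mul]; exact norm_cf_W a b
    · obtain ⟨rfl, rfl⟩ : a = 0 ∧ b = 0 := by omega
      exact cf_W_low
  have hmain := SB_main (n := n) hr.le (by positivity) (by positivity) hσ hx he hd k le_rfl k le_rfl
  rw [sub_add_cancel, sub_add_cancel, cf_sub, ← pow_mul, cf_dd_pow, if_pos rfl, ← Qk_eq, hrp] at hmain
  have hnq : n * (4 * (5 * (4 * r) ^ 6)) ≤ 1 / 16 := by
    have : (4 * r) ^ 6 = 4096 * (2 * k / n) ^ 3 := by rw [← hr2]; ring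
    rw [this]
    have e : n * (4 * (5 * (4096 * (2 * k / n : ℝ) ^ 3))) = 655360 * k ^ 3 / n ^ 2 := by field_simp; norm_num
    rw [e, div_le_iff₀ (by positivity)]
    linarith
  have hpb := pow_bound n (by positivity) hnq
  have hcast : (Qk k n : ℂ) - ((2 * n).choose k : ℂ) / 2 ^ k = ((Qk k n - MM n k : ℝ) : ℂ) := by
    unfold MM; push_cast; rfl
  rw [hcast, Complex.norm_real, Real.norm_eq_abs, hσdef, ← mul_assoc] at hmain
  have h3 := le_of_mul_le_mul_right hmain (by positivity : (0 : ℝ) < (2 * k / n) ^ k)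
  refine h3.trans ?_
  have h4 : (1 + 4 * (5 * (4 * r) ^ 6)) ^ n * (1 + 4 * (1 * (4 * r) ^ 1)) ≤ 16 / 15 * (17 / 16) := by
    gcongr
    linarith
  nlinarith

lemma MM_eq (n k : ℕ) : MM n k = (∏ j ∈ range k, ((n : ℝ) - j / 2)) / k.factorial := by
  induction k with
  | zero => simp [MM]
  | succ k ih =>
    have h1 : (((2 * n).choose (k + 1) : ℕ) : ℝ) * (k + 1) = ((2 * n).choose k : ℕ) * (2 * n - k) := by
      by_cases hk : k ≤ 2 * n
      · have := Nat.choose_succ_right_eq (2 * n) k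
        have h2 : ((2 * n - k : ℕ) : ℝ) = 2 * n - k := by rw [Nat.cast_sub hk]; push_cast; ring
        rw [← h2]; exact_mod_cast this
      · rw [Nat.choose_eq_zero_of_lt (by omega), Nat.choose_eq_zero_of_lt (by omega)]; simp
    have hk1 : ((k : ℝ) + 1) ≠ 0 := by positivity
    have h2 : MM n (k + 1) = MM n k * ((n - k / 2) / (k + 1)) := by
      unfold MM
      rw [pow_succ]
      field_simp
      linear_combination h1
    rw [h2, ih, Finset.prod_range_succ, Nat.factorial_succ]
    push_cast
    field_simp

lemma prod_sq (k : ℕ) (f : ℕ → ℝ) : (∏ j ∈ range k, f j) ^ 2 = ∏ j ∈ range k, f j * f (k - 1 - j) := by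
  rw [Finset.prod_mul_distrib, Finset.prod_range_reflect, sq]

lemma compare_prod {k n : ℕ} (hk : 1 ≤ k) (h1 : (131072 : ℝ) * k ≤ n) (h2 : 10485760 * (k : ℝ) ^ 3 ≤ (n : ℝ) ^ 2) :
    0 < gbinom (n + k / 4) k ∧ gbinom (n + k / 4) k ≤ 2 * MM n k ∧ MM n k ≤ 2 * gbinom (n + k / 4) k := by
  have hk0 : (1 : ℝ) ≤ k := by exact_mod_cast hk
  have hn : (0 : ℝ) < n := by linarith
  rw [MM_eq, gbinom]
  set P1 := ∏ j ∈ range k, ((n : ℝ) - j / 2) with hP1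
  set P2 := ∏ j ∈ range k, ((n : ℝ) + k / 4 - j) with hP2
  have hj : ∀ j ∈ range k, (0 : ℝ) ≤ j ∧ (j : ℝ) ≤ k - 1 ∧ ((k - 1 - j : ℕ) : ℝ) = k - 1 - j := by
    intro j hj
    have hj' : j + 1 ≤ k := Finset.mem_range.1 hj
    have : ((j : ℝ) + 1) ≤ k := by exact_mod_cast hj'
    refine ⟨by positivity, by linarith, ?_⟩
    rw [Nat.sub_sub, Nat.cast_sub (by omega)]; push_cast; ring
  have hp1 : 0 < P1 := Finset.prod_pos fun j hh => by
    obtain ⟨a, b, _⟩ := hj j hh; linarith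
  have hp2 : 0 < P2 := Finset.prod_pos fun j hh => by
    obtain ⟨a, b, _⟩ := hj j hh; linarith
  have hfac : (0 : ℝ) < k.factorial := by positivity
  set δ : ℝ := 2 / n + 4 * k ^ 2 / n ^ 2 with hδ
  have hδ0 : 0 ≤ δ := by positivity
  have hkδ : k * δ ≤ 1 / 16 := by
    have e : k * δ = 2 * (k / n) + 4 * (k ^ 3 / n ^ 2) := by rw [hδ]; field_simp
    have a : (k : ℝ) / n ≤ 1 / 131072 := by rw [div_le_iff₀ hn]; linarith
    have b : (k : ℝ) ^ 3 / n ^ 2 ≤ 1 / 10485760 := by rw [div_le_iff₀ (by positivity)]; linarith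
    rw [e]; linarith
  have hpb := pow_bound k hδ0 hkδ
  have key : ∀ j ∈ range k,
      (0 ≤ ((n : ℝ) - j / 2) * (n - ((k - 1 - j : ℕ) : ℝ) / 2)) ∧
      (0 ≤ ((n : ℝ) + k / 4 - j) * (n + k / 4 - ((k - 1 - j : ℕ) : ℝ))) ∧
      ((n : ℝ) - j / 2) * (n - ((k - 1 - j : ℕ) : ℝ) / 2) ≤
        (1 + δ) * (((n : ℝ) + k / 4 - j) * (n + k / 4 - ((k - 1 - j : ℕ) : ℝ))) ∧
      ((n : ℝ) + k / 4 - j) * (n + k / 4 - ((k - 1 - j : ℕ) : ℝ)) ≤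
        (1 + δ) * (((n : ℝ) - j / 2) * (n - ((k - 1 - j : ℕ) : ℝ) / 2)) := by
    intro j hh
    obtain ⟨a, b, c⟩ := hj j hh
    rw [c]
    have hδn : δ * (n ^ 2 / 4) = n / 2 + k ^ 2 := by rw [hδ]; field_simp; ring
    have f1 : (n : ℝ) / 2 ≤ n - j / 2 := by linarith
    have f2 : (n : ℝ) / 2 ≤ n - (k - 1 - j) / 2 := by linarith
    have g1 : (n : ℝ) / 2 ≤ n + k / 4 - j := by linarith
    have g2 : (n : ℝ) / 2 ≤ n + k / 4 - (k - 1 - j) := by linarith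
    have F1 : (n : ℝ) / 2 * (n / 2) ≤ (n - j / 2) * (n - (k - 1 - j) / 2) :=
      mul_le_mul f1 f2 (by positivity) (by linarith)
    have G1 : (n : ℝ) / 2 * (n / 2) ≤ (n + k / 4 - j) * (n + k / 4 - (k - 1 - j)) :=
      mul_le_mul g1 g2 (by positivity) (by linarith)
    have n0 : (0 : ℝ) ≤ n / 2 * (n / 2) := by positivity
    have F2 := mul_le_mul_of_nonneg_left F1 hδ0
    have G2 := mul_le_mul_of_nonneg_left G1 hδ0
    have hd : ((n : ℝ) + k / 4 - j) * (n + k / 4 - (k - 1 - j)) - (n - j / 2) * (n - (k - 1 - j) / 2) =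
      n / 2 + k ^ 2 / 16 - k * (k - 1) / 4 + 3 / 4 * (j * (k - 1 - j)) := by ring
    have m1 : 0 ≤ (j : ℝ) * (k - 1 - j) := mul_nonneg a (by linarith)
    have m2 : (j : ℝ) * (k - 1 - j) ≤ k * k := mul_le_mul (by linarith) (by linarith) (by linarith) (by linarith)
    refine ⟨n0.trans F1, n0.trans G1, ?_, ?_⟩ <;> nlinarith
  have s1 : P1 ^ 2 ≤ (1 + δ) ^ k * P2 ^ 2 := by
    rw [hP1, hP2, prod_sq, prod_sq]
    have : (1 + δ) ^ k = ∏ _j ∈ range k, (1 + δ) := by simp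
    rw [this, ← Finset.prod_mul_distrib]
    exact Finset.prod_le_prod (fun j hh => (key j hh).1) fun j hh => (key j hh).2.2.1
  have s2 : P2 ^ 2 ≤ (1 + δ) ^ k * P1 ^ 2 := by
    rw [hP1, hP2, prod_sq, prod_sq]
    have : (1 + δ) ^ k = ∏ _j ∈ range k, (1 + δ) := by simp
    rw [this, ← Finset.prod_mul_distrib]
    exact Finset.prod_le_prod (fun j hh => (key j hh).2.1) fun j hh => (key j hh).2.2.2
  have t1 : P1 ≤ 2 * P2 := by
    refine le_of_sq_le_sq ?_ (by positivity)
    nlinarith [sq_nonneg P2]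
  have t2 : P2 ≤ 2 * P1 := by
    refine le_of_sq_le_sq ?_ (by positivity)
    nlinarith [sq_nonneg P1]
  refine ⟨by positivity, ?_, ?_⟩
  · rw [← mul_div_assoc]; gcongr
  · rw [← mul_div_assoc]; gcongr

lemma Qk_zero (n : ℕ) : Qk 0 n = 1 := by
  unfold Qk Q
  have hc : Sfin.card = 4 := by decide
  simp [Z, F_zero, hc]

theorem comparison :
    ∃ ψ : ℕ → ℝ, Monotone ψ ∧ Filter.Tendsto ψ Filter.atTop Filter.atTop ∧
      (∀ k : ℕ, 0 < ψ k) ∧ ∃ C > (0 : ℝ), ∀ k n : ℕ, (k : ℝ) ^ 2 < (n : ℝ) * ψ k →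
        (1 / 4) * gbinom ((n : ℝ) + (k : ℝ) / 4) k ≤ Qk k n ∧
        Qk k n ≤ C * gbinom ((n : ℝ) + (k : ℝ) / 4) k := by
  refine ⟨fun k => 1 / 1000000 * Real.sqrt (k + 1), ?_, ?_, ?_, 4, by norm_num, ?_⟩
  · intro a b hab
    have : (a : ℝ) ≤ b := by exact_mod_cast hab
    dsimp only
    gcongr
  · refine Filter.Tendsto.const_mul_atTop (by norm_num) (Real.tendsto_sqrt_atTop.comp ?_)
    exact Filter.tendsto_atTop_add_const_right _ _ tendsto_natCast_atTop_atTop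
  · intro k; positivity
  · intro k n h
    rcases Nat.eq_zero_or_pos k with rfl | hk
    · rw [Qk_zero]
      simp [gbinom]
      norm_num
    · have hk0 : (1 : ℝ) ≤ k := by exact_mod_cast hk
      have hs := Real.sq_sqrt (by positivity : (0 : ℝ) ≤ (k : ℝ) + 1)
      have h4 : (k : ℝ) ^ 4 ≤ n ^ 2 * (1 / 1000000) ^ 2 * (k + 1) := by
        have := pow_le_pow_left₀ (by positivity) h.le 2
        calc (k : ℝ) ^ 4 = (k ^ 2) ^ 2 := by ring
          _ ≤ _ := this
          _ = n ^ 2 * (1 / 1000000) ^ 2 * (Real.sqrt (k + 1)) ^ 2 := by ring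
          _ = _ := by rw [hs]
      have h3 : 500000000000 * (k : ℝ) ^ 3 ≤ n ^ 2 := by
        have a : (n : ℝ) ^ 2 * (1 / 1000000) ^ 2 * (k + 1) ≤ n ^ 2 * (1 / 1000000) ^ 2 * (2 * k) := by
          gcongr; linarith
        have b : (k : ℝ) * k ^ 3 ≤ k * (n ^ 2 * (1 / 1000000) ^ 2 * 2) := by nlinarith
        have c := le_of_mul_le_mul_left b (by linarith)
        linarith
      have hk3 : (k : ℝ) ^ 2 ≤ k ^ 3 := pow_le_pow_right₀ hk0 (by norm_num)
      have h1 : (131072 : ℝ) * k ≤ n := by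
        refine le_of_sq_le_sq ?_ (by positivity)
        nlinarith [sq_nonneg (k : ℝ)]
      have h2 : 10485760 * (k : ℝ) ^ 3 ≤ (n : ℝ) ^ 2 := by
        have : (0 : ℝ) ≤ (k : ℝ) ^ 3 := by positivity
        linarith
      have hQ := abs_le.1 (Q_main hk h1 h2)
      obtain ⟨c0, c1, c2⟩ := compare_prod hk h1 h2
      constructor <;> linarith [hQ.1, hQ.2]
end
end

section
/- Let k ∈ ℕ and let a, b ∈ ℝ with a ≥ 2k and b ≥ 0. Then Σ_{j∈ℕ, j≤k, j ≤ 6ekb/a} binom(a, k−j)·binom(b, j) ≥ (1/2)·binom(a+b, k), where e is Euler's number. -/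
open Finset

noncomputable section

lemma gb_succ (x : ℝ) (n : ℕ) : gbinom x (n + 1) * (n + 1) = gbinom x n * (x - n) := by
  unfold gbinom
  rw [Finset.prod_range_succ, Nat.factorial_succ]
  have : (n.factorial : ℝ) ≠ 0 := by positivity
  push_cast
  field_simp

lemma gb_zero (x : ℝ) : gbinom x 0 = 1 := by simp [gbinom]

lemma gb_eq (x : ℝ) (n : ℕ) : gbinom x n = Ring.choose x n := by
  induction n with
  | zero => simp [gb_zero]
  | succ n ih =>
    have h1 := gb_succ x n
    have h2 := Ring.descPochhammer_eq_factorial_smul_choose x n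
    have h3 := Ring.descPochhammer_eq_factorial_smul_choose x (n + 1)
    rw [descPochhammer_succ_right, Polynomial.smeval_mul, h2, Polynomial.smeval_sub,
      Polynomial.smeval_X, Polynomial.smeval_natCast, Nat.factorial_succ] at h3
    simp only [nsmul_eq_mul, pow_one, pow_zero, mul_one] at h3
    push_cast at h3
    have hf : (n.factorial : ℝ) ≠ 0 := by positivity
    have hn : (n : ℝ) + 1 ≠ 0 := by positivity
    rw [ih] at h1
    apply mul_right_cancel₀ hn
    apply mul_left_cancel₀ hf
    rw [h1]
    linarith

lemma gb_vand (a b : ℝ) (k : ℕ) :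
    gbinom (a + b) k = ∑ j ∈ Finset.range (k + 1), gbinom a (k - j) * gbinom b j := by
  rw [add_comm a b, gb_eq, Ring.add_choose_eq k (Commute.all b a),
    Finset.Nat.sum_antidiagonal_eq_sum_range_succ_mk]
  refine Finset.sum_congr rfl fun j _ => ?_
  rw [gb_eq, gb_eq, mul_comm]

lemma gb_nonneg (x : ℝ) (n : ℕ) (h : (n : ℝ) ≤ x + 1) : 0 ≤ gbinom x n := by
  unfold gbinom
  apply div_nonneg _ (by positivity)
  apply Finset.prod_nonneg
  intro i hi
  have : (i : ℝ) + 1 ≤ n := by exact_mod_cast Finset.mem_range.mp hi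
  linarith

lemma gb_le_pow (x : ℝ) (n : ℕ) (h : (n : ℝ) ≤ x + 1) : gbinom x n ≤ x ^ n / n.factorial := by
  unfold gbinom
  gcongr
  calc ∏ j ∈ Finset.range n, (x - j) ≤ ∏ j ∈ Finset.range n, x := by
        apply Finset.prod_le_prod
        · intro i hi
          have : (i : ℝ) + 1 ≤ n := by exact_mod_cast Finset.mem_range.mp hi
          linarith
        · intro i _
          have : (0 : ℝ) ≤ i := by positivity
          linarith
    _ = x ^ n := by simp

lemma gb_le_one (x : ℝ) (n : ℕ) (h : (n : ℝ) ≤ x + 1) (h' : x ≤ n) : gbinom x n ≤ 1 := by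
  unfold gbinom
  rw [div_le_one (by positivity), ← Nat.descFactorial_self, Nat.descFactorial_eq_prod_range]
  push_cast
  apply Finset.prod_le_prod
  · intro i hi
    have : (i : ℝ) + 1 ≤ n := by exact_mod_cast Finset.mem_range.mp hi
    linarith
  · intro i hi
    rw [Nat.cast_sub (Finset.mem_range.mp hi).le]
    linarith

lemma gb_mono (a b : ℝ) (k : ℕ) (ha : (k : ℝ) ≤ a + 1) (hb : 0 ≤ b) :
    gbinom a k ≤ gbinom (a + b) k := by
  unfold gbinom
  gcongr
  · intro i hi
    have : (i : ℝ) + 1 ≤ k := by exact_mod_cast Finset.mem_range.mp hi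
    linarith
  · linarith

/-- decay of generalized binomials beyond the argument -/
lemma gb_abs_step (b : ℝ) (hb : 0 ≤ b) (j : ℕ) (h : b ≤ j) :
    |gbinom b (j + 1)| ≤ |gbinom b j| ∧ gbinom b (j + 1) * gbinom b j ≤ 0 := by
  have h1 := gb_succ b j
  have hj : (0 : ℝ) < j + 1 := by positivity
  have e : gbinom b (j + 1) = - (((j : ℝ) - b) / (j + 1)) * gbinom b j := by
    field_simp
    linarith
  have r0 : 0 ≤ ((j : ℝ) - b) / (j + 1) := div_nonneg (by linarith) hj.le
  have r1 : ((j : ℝ) - b) / (j + 1) ≤ 1 := by rw [div_le_one hj]; linarith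
  rw [e]
  constructor
  · rw [abs_mul, abs_neg, abs_of_nonneg r0]
    exact mul_le_of_le_one_left (abs_nonneg _) r1
  · nlinarith [mul_nonneg r0 (mul_self_nonneg (gbinom b j))]

lemma gb_half (b : ℝ) (hb : 0 ≤ b) (n : ℕ) (hn : (n : ℝ) ≤ b) (hn' : b < n + 1) (j : ℕ) :
    |gbinom b (n + 2 + j)| ≤ 1 / 2 := by
  induction j with
  | zero =>
    have h1 := gb_succ b (n + 1)
    have h2 := gb_le_one b (n + 1) (by push_cast; linarith) (by push_cast; linarith)
    have h3 := gb_nonneg b (n + 1) (by push_cast; linarith)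
    push_cast at h1
    have hj : (0 : ℝ) < (n : ℝ) + 1 + 1 := by positivity
    have e : gbinom b (n + 2) = - (gbinom b (n + 1) * ((n : ℝ) + 1 - b) / (n + 1 + 1)) := by
      field_simp
      linarith
    have hp : 0 ≤ gbinom b (n + 1) * ((n : ℝ) + 1 - b) := mul_nonneg h3 (by linarith)
    rw [add_zero, e, abs_neg, abs_of_nonneg (div_nonneg hp hj.le), div_le_iff₀ hj]
    have : (0 : ℝ) ≤ n := by positivity
    nlinarith
  | succ j ih =>
    refine le_trans (gb_abs_step b hb (n + 2 + j) ?_).1 ih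
    push_cast
    have : (0 : ℝ) ≤ j := by positivity
    linarith

lemma alt_sum (N : ℕ) : ∀ t : ℕ → ℝ, (∀ i, |t (i + 1)| ≤ |t i| ∧ t (i + 1) * t i ≤ 0) →
    min 0 (t 0) ≤ ∑ i ∈ Finset.range N, t i ∧ ∑ i ∈ Finset.range N, t i ≤ max 0 (t 0) := by
  induction N with
  | zero => intro t _; simp
  | succ N ih =>
    intro t ht
    rw [Finset.sum_range_succ']
    obtain ⟨l, u⟩ := ih (fun i => t (i + 1)) (fun i => ht (i + 1))
    obtain ⟨h1, h2⟩ := ht 0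
    simp only [zero_add] at *
    rcases lt_trichotomy (t 0) 0 with h | h | h
    · have h3 : 0 ≤ t 1 := by
        by_contra hc
        nlinarith
      rw [abs_of_nonneg h3, abs_of_neg h] at h1
      rw [min_eq_left h3] at l
      rw [max_eq_right h3] at u
      rw [min_eq_right h.le, max_eq_left h.le]
      constructor <;> linarith
    · rw [h] at h1 ⊢
      have h3 : t 1 = 0 := by simpa using h1
      rw [h3] at l u
      simpa using And.intro l u
    · have h3 : t 1 ≤ 0 := by
        by_contra hc
        nlinarith
      rw [abs_of_nonpos h3, abs_of_pos h] at h1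
      rw [min_eq_right h3] at l
      rw [max_eq_left h3] at u
      rw [min_eq_left h.le, max_eq_right h.le]
      constructor <;> linarith

/-- the coefficients `binom(a, k-j)`, extended by zero -/
def cc (a : ℝ) (k j : ℕ) : ℝ := if j ≤ k then gbinom a (k - j) else 0

lemma cc_nonneg (a : ℝ) (k j : ℕ) (ha : 2 * (k : ℝ) ≤ a) : 0 ≤ cc a k j := by
  unfold cc
  split_ifs with h
  · apply gb_nonneg
    rw [Nat.cast_sub h]
    have : (0 : ℝ) ≤ j := by positivity
    have : (0 : ℝ) ≤ k := by positivity
    linarith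
  · exact le_rfl

lemma cc_step (a : ℝ) (k j : ℕ) (ha : 2 * (k : ℝ) ≤ a) (ha0 : 0 < a) :
    cc a k (j + 1) ≤ (2 * k / a) * cc a k j := by
  by_cases h : j + 1 ≤ k
  · obtain ⟨d, rfl⟩ := Nat.exists_eq_add_of_le h
    have hc := cc_nonneg a (j + 1 + d) (j + 1) ha
    have hc' := cc_nonneg a (j + 1 + d) j ha
    have e1 : cc a (j + 1 + d) (j + 1) = gbinom a d := by
      unfold cc
      rw [if_pos h]
      congr 1
      omega
    have e2 : cc a (j + 1 + d) j = gbinom a (d + 1) := by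
      unfold cc
      rw [if_pos (by omega)]
      congr 1
      omega
    rw [e1] at hc ⊢
    rw [e2] at hc' ⊢
    have h1 := gb_succ a d
    push_cast at ha ⊢
    have hj : (0 : ℝ) ≤ j := by positivity
    have hd : (0 : ℝ) ≤ d := by positivity
    rw [div_mul_eq_mul_div, le_div_iff₀ ha0]
    have h2 : gbinom a d * a ≤ gbinom a d * (2 * (a - d)) := by
      apply mul_le_mul_of_nonneg_left _ hc
      linarith
    nlinarith [mul_nonneg hc' hj]
  · unfold cc
    rw [if_neg h]
    have := cc_nonneg a k j ha
    unfold cc at this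
    positivity

lemma cc_anti (a : ℝ) (k j : ℕ) (ha : 2 * (k : ℝ) ≤ a) (ha0 : 0 < a) :
    cc a k (j + 1) ≤ cc a k j := by
  refine (cc_step a k j ha ha0).trans (mul_le_of_le_one_left (cc_nonneg a k j ha) ?_)
  rwa [div_le_one ha0]

lemma cc_pow (a : ℝ) (k j : ℕ) (ha : 2 * (k : ℝ) ≤ a) (ha0 : 0 < a) :
    cc a k j ≤ (2 * k / a) ^ j * gbinom a k := by
  induction j with
  | zero => simp [cc]
  | succ j ih =>
    refine (cc_step a k j ha ha0).trans ?_
    rw [pow_succ', mul_assoc]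
    exact mul_le_mul_of_nonneg_left ih (by positivity)

lemma cc_le (a : ℝ) (k j : ℕ) (ha : 2 * (k : ℝ) ≤ a) (ha0 : 0 < a) :
    cc a k j ≤ gbinom a k := by
  induction j with
  | zero => simp [cc]
  | succ j ih => exact (cc_anti a k j ha ha0).trans ih

lemma term_bound (a b : ℝ) (k j : ℕ) (ha : 2 * (k : ℝ) ≤ a) (ha0 : 0 < a) (hb : 0 ≤ b)
    (hj : (j : ℝ) ≤ b + 1) (hL : 6 * Real.exp 1 * (k : ℝ) * b / a < j) :
    cc a k j * gbinom b j ≤ (1 / 3) ^ j * gbinom a k := by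
  have hG : 0 ≤ gbinom a k := (cc_nonneg a k j ha).trans (cc_le a k j ha ha0)
  have hf : (0 : ℝ) < j.factorial := by positivity
  calc cc a k j * gbinom b j ≤ ((2 * k / a) ^ j * gbinom a k) * (b ^ j / j.factorial) := by
        apply mul_le_mul (cc_pow a k j ha ha0) (gb_le_pow b j hj) (gb_nonneg b j hj)
        positivity
    _ = (2 * k * b / a) ^ j / j.factorial * gbinom a k := by
        rw [show 2 * (k : ℝ) * b / a = (2 * k / a) * b by ring, mul_pow]
        ring
    _ ≤ (1 / 3) ^ j * gbinom a k := by
        apply mul_le_mul_of_nonneg_right _ hG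
        have he : 0 < Real.exp 1 := Real.exp_pos 1
        have h1 : 2 * k * b / a ≤ (1 / 3) * (Real.exp 1)⁻¹ * j := by
          have : 6 * Real.exp 1 * (k : ℝ) * b / a = 3 * Real.exp 1 * (2 * k * b / a) := by ring
          rw [this] at hL
          have h2 : 2 * k * b / a = (1 / 3) * (Real.exp 1)⁻¹ * (3 * Real.exp 1 * (2 * k * b / a)) := by
            field_simp
          rw [h2]
          exact mul_le_mul_of_nonneg_left hL.le (by positivity)
        have h3 := Real.pow_div_factorial_le_exp (j : ℝ) (Nat.cast_nonneg j) j
        have h4 : Real.exp (j : ℝ) = Real.exp 1 ^ j := by rw [← Real.exp_nat_mul, mul_one]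
        calc (2 * k * b / a) ^ j / j.factorial
            ≤ ((1 / 3) * (Real.exp 1)⁻¹ * j) ^ j / j.factorial := by gcongr
          _ = (1 / 3) ^ j * ((Real.exp 1)⁻¹ ^ j * ((j : ℝ) ^ j / j.factorial)) := by
              rw [mul_pow, mul_pow]; ring
          _ ≤ (1 / 3) ^ j * ((Real.exp 1)⁻¹ ^ j * Real.exp 1 ^ j) := by
              rw [h4] at h3
              gcongr
          _ = (1 / 3) ^ j := by
              rw [← mul_pow, inv_mul_cancel₀ he.ne', one_pow, mul_one]

lemma geo (p q : ℕ) : ∑ j ∈ Finset.Ico (p + 1) q, (1 / 3 : ℝ) ^ j ≤ 1 / 2 := by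
  have h : ∀ q : ℕ, ∑ j ∈ Finset.Ico 1 (q + 1), (1 / 3 : ℝ) ^ j = 1 / 2 - (1 / 2) * (1 / 3) ^ q := by
    intro q
    induction q with
    | zero => simp
    | succ q ih =>
      rw [Finset.sum_Ico_succ_top (by omega), ih]
      ring
  calc ∑ j ∈ Finset.Ico (p + 1) q, (1 / 3 : ℝ) ^ j ≤ ∑ j ∈ Finset.Ico 1 (q + 1), (1 / 3 : ℝ) ^ j := by
        apply Finset.sum_le_sum_of_subset_of_nonneg
        · apply Finset.Ico_subset_Ico <;> omega
        · intros; positivity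
    _ ≤ 1 / 2 := by
        rw [h]
        have : (0 : ℝ) ≤ (1 / 3) ^ q := by positivity
        linarith

lemma tail_alt (a b : ℝ) (k : ℕ) (ha : 2 * (k : ℝ) ≤ a) (ha0 : 0 < a) (hb : 0 ≤ b)
    (s q : ℕ) (hs : b ≤ s) :
    ∑ j ∈ Finset.Ico s q, cc a k j * gbinom b j ≤ max 0 (cc a k s * gbinom b s) := by
  rw [Finset.sum_Ico_eq_sum_range]
  refine (alt_sum (q - s) (fun i => cc a k (s + i) * gbinom b (s + i)) ?_).2
  intro i
  obtain ⟨h1, h2⟩ := gb_abs_step b hb (s + i)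
    (by push_cast; have : (0 : ℝ) ≤ i := by positivity
        linarith)
  have c0 := cc_nonneg a k (s + i) ha
  have c1 := cc_nonneg a k (s + i + 1) ha
  have c2 := cc_anti a k (s + i) ha ha0
  simp only [← add_assoc]
  constructor
  · rw [abs_mul, abs_mul, abs_of_nonneg c0, abs_of_nonneg c1]
    exact mul_le_mul c2 h1 (abs_nonneg _) c0
  · have := mul_nonpos_of_nonneg_of_nonpos (mul_nonneg c1 c0) h2
    linarith

lemma tail_bound (a b : ℝ) (k m : ℕ) (ha : 2 * (k : ℝ) ≤ a) (ha0 : 0 < a) (hb : 0 ≤ b)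
    (hL : 6 * Real.exp 1 * (k : ℝ) * b / a < m + 1) :
    ∑ j ∈ Finset.Ico (m + 1) (k + 1), cc a k j * gbinom b j ≤ 1 / 2 * gbinom a k := by
  have hG : 0 ≤ gbinom a k := (cc_nonneg a k 0 ha).trans (cc_le a k 0 ha ha0)
  set n := ⌊b⌋₊ with hn
  have n1 : (n : ℝ) ≤ b := Nat.floor_le hb
  have n2 : b < n + 1 := Nat.lt_floor_add_one b
  have first : ∀ q : ℕ, q ≤ n + 2 →
      ∑ j ∈ Finset.Ico (m + 1) q, cc a k j * gbinom b j ≤ 1 / 2 * gbinom a k := by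
    intro q hq
    calc ∑ j ∈ Finset.Ico (m + 1) q, cc a k j * gbinom b j
        ≤ ∑ j ∈ Finset.Ico (m + 1) q, (1 / 3 : ℝ) ^ j * gbinom a k := by
          apply Finset.sum_le_sum
          intro j hj
          rw [Finset.mem_Ico] at hj
          have h1 : (m : ℝ) + 1 ≤ j := by exact_mod_cast hj.1
          have h2 : (j : ℝ) ≤ n + 1 := by
            have : j ≤ n + 1 := by omega
            exact_mod_cast this
          exact term_bound a b k j ha ha0 hb (by linarith) (by linarith)
      _ = (∑ j ∈ Finset.Ico (m + 1) q, (1 / 3 : ℝ) ^ j) * gbinom a k := by rw [Finset.sum_mul]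
      _ ≤ 1 / 2 * gbinom a k := mul_le_mul_of_nonneg_right (geo m q) hG
  rcases le_or_gt (n + 2) (m + 1) with hA | hB
  · have hA' : (n : ℝ) + 2 ≤ m + 1 := by exact_mod_cast hA
    refine (tail_alt a b k ha ha0 hb (m + 1) (k + 1) (by push_cast; linarith)).trans ?_
    apply max_le (by positivity)
    obtain ⟨d, hd⟩ := Nat.exists_eq_add_of_le hA
    rw [hd]
    have h1 := gb_half b hb n n1 n2 d
    have c0 := cc_nonneg a k (n + 2 + d) ha
    have c1 := cc_le a k (n + 2 + d) ha ha0
    have h2 := le_abs_self (gbinom b (n + 2 + d))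
    nlinarith [mul_le_mul_of_nonneg_left (h2.trans h1) c0]
  · rcases le_or_gt (k + 1) (n + 2) with hk | hk
    · exact first _ hk
    · rw [← Finset.sum_Ico_consecutive _ hB.le hk.le]
      have h1 := first (n + 2) le_rfl
      have h2 := tail_alt a b k ha ha0 hb (n + 2) (k + 1) (by push_cast; linarith)
      have h3 : cc a k (n + 2) * gbinom b (n + 2) ≤ 0 := by
        apply mul_nonpos_of_nonneg_of_nonpos (cc_nonneg a k _ ha)
        have e := gb_succ b (n + 1)
        push_cast at e
        have g := gb_nonneg b (n + 1) (by push_cast; linarith)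
        by_contra hc
        push Not at hc
        have : 0 < gbinom b (n + 1 + 1) * ((n : ℝ) + 1 + 1) := by
          apply mul_pos hc; positivity
        nlinarith
      rw [max_eq_left h3] at h2
      linarith

theorem sum_head_estimate (k : ℕ) (a b : ℝ) (ha : 2 * (k : ℝ) ≤ a) (hb : 0 ≤ b) :
    (1 / 2) * gbinom (a + b) k ≤
      ∑ j ∈ (Finset.range (k + 1)).filter
          (fun j : ℕ => (j : ℝ) ≤ 6 * Real.exp 1 * (k : ℝ) * b / a),
        gbinom a (k - j) * gbinom b j := by
  rcases Nat.eq_zero_or_pos k with rfl | hk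
  · simp [gb_zero]
    norm_num
  have hk' : (0 : ℝ) < k := by exact_mod_cast hk
  have ha0 : 0 < a := by linarith
  set L := 6 * Real.exp 1 * (k : ℝ) * b / a with hLdef
  have hL0 : 0 ≤ L := by positivity
  have hv := gb_vand a b k
  rw [← Finset.sum_filter_add_sum_filter_not (Finset.range (k + 1)) (fun j : ℕ => (j : ℝ) ≤ L)]
    at hv
  have ht : ∑ j ∈ (Finset.range (k + 1)).filter (fun j : ℕ => ¬ (j : ℝ) ≤ L),
      gbinom a (k - j) * gbinom b j ≤ 1 / 2 * gbinom a k := by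
    refine le_trans (le_of_eq ?_)
      (tail_bound a b k ⌊L⌋₊ ha ha0 hb (Nat.lt_floor_add_one L))
    have hs : (Finset.range (k + 1)).filter (fun j : ℕ => ¬ (j : ℝ) ≤ L)
        = Finset.Ico (⌊L⌋₊ + 1) (k + 1) := by
      ext j
      rw [Finset.mem_filter, Finset.mem_range, Finset.mem_Ico, not_le, ← Nat.floor_lt hL0]
      omega
    rw [hs]
    refine Finset.sum_congr rfl fun j hj => ?_
    rw [Finset.mem_Ico] at hj
    unfold cc
    rw [if_pos (by omega)]
  have hm := gb_mono a b k (by linarith) hb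
  linarith
end
end
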